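/- arXiv:2103.10004 — 6 statements merged into one kernel-verified Lean document; each statement's English description precedes it below -/
import Mathlib

section
/- For m = 4 and m = 5, the covering functional of the three-dimensional unit cross-polytope satisfies γ_m(K₁) = 1; that is, γ₄(K₁) = 1 and γ₅(K₁) = 1. -/
open Pointwise

/-- The unit cross-polytope in ℝ³. -/
def K1 : Set (Fin 3 → ℝ) := {x | |x 0| + |x 1| + |x 2| ≤ 1}

/-- `K1` can be covered by `m` translates of `lam • K1`. -/
def CoversWith (m : ℕ) (lam : ℝ) : Prop :=
  ∃ u : Fin m → (Fin 3 → ℝ), K1 ⊆ ⋃ i, (u i +ᵥ lam • K1)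

/-- The six vertices `±eᵢ` of the cross-polytope. -/
def crossVertex (p : Fin 3 × Bool) : Fin 3 → ℝ :=
  Pi.single p.1 (if p.2 then 1 else -1)

lemma crossVertex_mem_K1 (p : Fin 3 × Bool) : crossVertex p ∈ K1 := by
  obtain ⟨i, b⟩ := p
  fin_cases i <;> cases b <;> simp [crossVertex, K1]

/-- Distinct vertices are at `ℓ¹`-distance two. -/
lemma l1_dist_crossVertex {p q : Fin 3 × Bool} (h : p ≠ q) :
    |crossVertex p 0 - crossVertex q 0| + |crossVertex p 1 - crossVertex q 1|
      + |crossVertex p 2 - crossVertex q 2| = 2 := by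
  obtain ⟨i, b⟩ := p
  obtain ⟨j, c⟩ := q
  fin_cases i <;> fin_cases j <;> cases b <;> cases c <;>
    first
    | exact absurd rfl h
    | norm_num [crossVertex, Pi.single_apply, Fin.ext_iff]

lemma l1_dist_le_of_mem_vadd_smul_K1 {lam : ℝ} (hlam : 0 < lam) {u x : Fin 3 → ℝ}
    (hx : x ∈ u +ᵥ lam • K1) : |x 0 - u 0| + |x 1 - u 1| + |x 2 - u 2| ≤ lam := by
  obtain ⟨_, ⟨y, hy, rfl⟩, rfl⟩ := hx
  have hy' : |y 0| + |y 1| + |y 2| ≤ 1 := hy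
  simp only [vadd_eq_add, Pi.add_apply, Pi.smul_apply, smul_eq_mul, add_sub_cancel_left,
    abs_mul, abs_of_pos hlam]
  nlinarith

/-- Covering the cross-polytope by smaller homothets takes at least one for each vertex. -/
lemma CoversWith.one_le {m : ℕ} (hm : m < 6) {lam : ℝ} (hlam : 0 < lam)
    (h : CoversWith m lam) : 1 ≤ lam := by
  obtain ⟨u, hu⟩ := h
  choose f hf using fun p => Set.mem_iUnion.1 (hu (crossVertex_mem_K1 p))
  obtain ⟨p, q, hpq, hfpq⟩ := Fintype.exists_ne_map_eq_of_card_lt f (by simpa using hm)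
  have hp := l1_dist_le_of_mem_vadd_smul_K1 hlam (hf p)
  have hq := l1_dist_le_of_mem_vadd_smul_K1 hlam (hf q)
  rw [← hfpq] at hq
  have hd := l1_dist_crossVertex hpq
  have tri (i : Fin 3) : |crossVertex p i - crossVertex q i|
      ≤ |crossVertex p i - u (f p) i| + |crossVertex q i - u (f p) i| := by
    rw [abs_sub_comm (crossVertex q i)]
    exact abs_sub_le _ _ _
  linarith [tri 0, tri 1, tri 2]

lemma coversWith_one {m : ℕ} (hm : 0 < m) : CoversWith m 1 :=
  ⟨0, fun x hx => Set.mem_iUnion.2 ⟨⟨0, hm⟩, by simpa using hx⟩⟩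

lemma isLeast_coversWith {m : ℕ} (hm : 0 < m) (hm' : m < 6) :
    IsLeast {lam : ℝ | 0 < lam ∧ CoversWith m lam} 1 :=
  ⟨⟨one_pos, coversWith_one hm⟩, fun _ h => h.2.one_le hm' h.1⟩

/-- γ₄(K₁) = 1 and γ₅(K₁) = 1. -/
theorem gamma_four_and_five_eq_one :
    IsLeast {lam : ℝ | 0 < lam ∧ CoversWith 4 lam} 1 ∧
    IsLeast {lam : ℝ | 0 < lam ∧ CoversWith 5 lam} 1 :=
  ⟨isLeast_coversWith (by norm_num) (by norm_num),
    isLeast_coversWith (by norm_num) (by norm_num)⟩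
end

section
/- The covering functional of the three-dimensional unit cross-polytope by six translates satisfies γ₆(K₁) = 2/3. -/
open Pointwise

theorem mem_vadd_smul_K1 {lam : ℝ} (hlam : 0 < lam) (u x : Fin 3 → ℝ) :
    x ∈ u +ᵥ lam • K1 ↔ |x 0 - u 0| + |x 1 - u 1| + |x 2 - u 2| ≤ lam := by
  rw [Set.mem_vadd_set_iff_neg_vadd_mem, Set.mem_smul_set_iff_inv_smul_mem₀ hlam.ne']
  simp only [K1, Set.mem_ofPred_eq, Pi.smul_apply, Pi.neg_apply, vadd_eq_add,
    Pi.add_apply, smul_eq_mul, abs_mul, abs_inv, abs_of_pos hlam, ← mul_add]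
  rw [inv_mul_le_one₀ hlam]
  simp only [neg_add_eq_sub]

/-- The vertices of the cross-polytope together with the centroid of one facet. -/
noncomputable def separatedPoints : Fin 7 → Fin 3 → ℝ :=
  ![![1, 0, 0], ![-1, 0, 0], ![0, 1, 0], ![0, -1, 0], ![0, 0, 1], ![0, 0, -1],
    ![1 / 3, 1 / 3, 1 / 3]]

theorem separatedPoints_mem_K1 (i : Fin 7) : separatedPoints i ∈ K1 := by
  fin_cases i <;> simp [separatedPoints, K1]
  norm_num [abs_of_pos]

theorem four_thirds_le_dist_separatedPoints {i j : Fin 7} (hij : i ≠ j) :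
    4 / 3 ≤ |separatedPoints i 0 - separatedPoints j 0| +
      |separatedPoints i 1 - separatedPoints j 1| +
      |separatedPoints i 2 - separatedPoints j 2| := by
  fin_cases i <;> fin_cases j <;> first
    | exact absurd rfl hij
    | (simp [separatedPoints]; done)
    | (simp [separatedPoints]; norm_num [abs_of_pos, abs_of_neg])

theorem coversWith_six_two_thirds : CoversWith 6 (2 / 3) := by
  refine ⟨![![1 / 3, 0, 0], ![-1 / 3, 0, 0], ![0, 1 / 3, 0], ![0, -1 / 3, 0], ![0, 0, 1 / 3],
    ![0, 0, -1 / 3]], fun x hx => ?_⟩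
  have key (a b c : ℝ) (h : |a| + |b| + |c| ≤ 1) (hb : |b| ≤ |a|) (hc : |c| ≤ |a|) :
      |a - 1 / 3| + |b| + |c| ≤ 2 / 3 ∨ |a - -1 / 3| + |b| + |c| ≤ 2 / 3 := by
    rcases le_total 0 a with ha | ha
    · rw [abs_of_nonneg ha] at *
      left
      cases abs_cases (a - 1 / 3) <;> linarith
    · rw [abs_of_nonpos ha] at *
      right
      cases abs_cases (a - -1 / 3) <;> linarith
  have hx : |x 0| + |x 1| + |x 2| ≤ 1 := hx
  simp only [Set.mem_iUnion, mem_vadd_smul_K1 (show (0 : ℝ) < 2 / 3 by norm_num)]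
  have hmax : (|x 1| ≤ |x 0| ∧ |x 2| ≤ |x 0|) ∨ (|x 0| ≤ |x 1| ∧ |x 2| ≤ |x 1|) ∨
      (|x 0| ≤ |x 2| ∧ |x 1| ≤ |x 2|) := by
    grind
  rcases hmax with ⟨h, h'⟩ | ⟨h, h'⟩ | ⟨h, h'⟩
  · rcases key _ _ _ hx h h' with hk | hk
    · exact ⟨0, by simpa using hk⟩
    · exact ⟨1, by simpa using hk⟩
  · rcases key _ _ _ (by linarith) h h' with hk | hk
    · exact ⟨2, by simpa [add_comm, add_left_comm, add_assoc] using hk⟩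
    · exact ⟨3, by simpa [add_comm, add_left_comm, add_assoc] using hk⟩
  · rcases key _ _ _ (by linarith) h h' with hk | hk
    · exact ⟨4, by simpa [add_comm, add_left_comm, add_assoc] using hk⟩
    · exact ⟨5, by simpa [add_comm, add_left_comm, add_assoc] using hk⟩

theorem two_thirds_le_of_coversWith_six {lam : ℝ} (hlam : 0 < lam) (h : CoversWith 6 lam) :
    2 / 3 ≤ lam := by
  obtain ⟨u, hu⟩ := h
  have hcov (i : Fin 7) : ∃ k, separatedPoints i ∈ u k +ᵥ lam • K1 :=
    Set.mem_iUnion.mp (hu (separatedPoints_mem_K1 i))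
  choose f hf using hcov
  obtain ⟨i, j, hij, hfij⟩ := Fintype.exists_ne_map_eq_of_card_lt f (by simp)
  have hi := (mem_vadd_smul_K1 hlam _ _).mp (hf i)
  have hj := (mem_vadd_smul_K1 hlam _ _).mp (hf j)
  rw [hfij] at hi
  have hd := four_thirds_le_dist_separatedPoints hij
  have htri (k : Fin 3) := abs_sub_le (separatedPoints i k) (u (f j) k) (separatedPoints j k)
  simp only [abs_sub_comm (u (f j) _)] at htri
  linarith [htri 0, htri 1, htri 2]

/-- γ₆(K₁) = 2/3. -/
theorem gamma_six_eq_two_thirds :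
    IsLeast {lam : ℝ | 0 < lam ∧ CoversWith 6 lam} (2 / 3) :=
  ⟨⟨by norm_num, coversWith_six_two_thirds⟩,
    fun _ h => two_thirds_le_of_coversWith_six h.1 h.2⟩
end

section
/- Let 0 < λ ≤ 1 and u ∈ ℝ³, and suppose the homothetic copy λK₁ + u contains a vertex v of K₁. Then for every facet F of K₁ containing v, there exists a ratio μ with 0 ≤ μ ≤ λ such that F ∩ (λK₁ + u) ⊆ v + μ·(F − v); that is, the intersection of λK₁ + u with each facet of K₁ incident to v is contained in a homothetic copy of that facet, with homothety centre v and ratio not greater than λ. -/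
open Pointwise

/-- The six vertices of the unit cross-polytope. -/
def K1Vertices : Set (Fin 3 → ℝ) :=
  {![1, 0, 0], ![-1, 0, 0], ![0, 1, 0], ![0, -1, 0], ![0, 0, 1], ![0, 0, -1]}

/-- The facet of `K1` determined by a sign vector `e` (each `e i` being `1` or `-1`). -/
def K1Facet (e : Fin 3 → ℝ) : Set (Fin 3 → ℝ) :=
  convexHull ℝ {![e 0, 0, 0], ![0, e 1, 0], ![0, 0, e 2]}

theorem mem_K1Facet_iff {e : Fin 3 → ℝ} (he : ∀ i, e i = 1 ∨ e i = -1) {x : Fin 3 → ℝ} :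
    x ∈ K1Facet e ↔ (∀ i, 0 ≤ e i * x i) ∧ e 0 * x 0 + e 1 * x 1 + e 2 * x 2 = 1 := by
  have hsq : ∀ i, e i * e i = 1 := fun i => by rcases he i with h | h <;> simp [h]
  constructor
  · intro hx
    have hconv : Convex ℝ
        {x : Fin 3 → ℝ | (∀ i, 0 ≤ e i * x i) ∧ e 0 * x 0 + e 1 * x 1 + e 2 * x 2 = 1} := by
      rintro y ⟨hy, hys⟩ z ⟨hz, hzs⟩ a b ha hb hab
      refine ⟨fun i => ?_, ?_⟩
      · have := add_nonneg (mul_nonneg ha (hy i)) (mul_nonneg hb (hz i))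
        simp only [Pi.add_apply, Pi.smul_apply, smul_eq_mul]
        linarith
      · simp only [Pi.add_apply, Pi.smul_apply, smul_eq_mul]
        linear_combination a * hys + b * hzs + hab
    refine convexHull_min ?_ hconv hx
    rintro y (rfl | rfl | rfl) <;> refine ⟨fun i => ?_, ?_⟩ <;> try fin_cases i
    all_goals simp [hsq]
  · rintro ⟨hx, hxs⟩
    have hmem : ∀ i, (![![e 0, 0, 0], ![0, e 1, 0], ![0, 0, e 2]] : Fin 3 → Fin 3 → ℝ) i ∈
        K1Facet e := fun i => subset_convexHull ℝ _ (by fin_cases i <;> simp)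
    have hcomb := (convex_convexHull ℝ _).sum_mem (t := Finset.univ) (fun i _ => hx i)
      (by simpa [Fin.sum_univ_three] using hxs) (fun i _ => hmem i)
    convert (show _ ∈ K1Facet e from hcomb) using 1
    ext i
    fin_cases i <;> simp [Fin.sum_univ_three] <;> linear_combination -(x _) * hsq _

theorem exists_eq_single_of_mem_K1Vertices_of_mem_K1Facet {e v : Fin 3 → ℝ}
    (he : ∀ i, e i = 1 ∨ e i = -1) (hv : v ∈ K1Vertices) (hvF : v ∈ K1Facet e) :
    ∃ j, v = Pi.single j (e j) := by
  have hsum := ((mem_K1Facet_iff he).1 hvF).2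
  rcases hv with rfl | rfl | rfl | rfl | rfl | rfl
  · exact ⟨0, by ext i; fin_cases i <;> simp at hsum ⊢; linarith⟩
  · exact ⟨0, by ext i; fin_cases i <;> simp at hsum ⊢; linarith⟩
  · exact ⟨1, by ext i; fin_cases i <;> simp at hsum ⊢; linarith⟩
  · exact ⟨1, by ext i; fin_cases i <;> simp at hsum ⊢; linarith⟩
  · exact ⟨2, by ext i; fin_cases i <;> simp at hsum ⊢; linarith⟩
  · exact ⟨2, by ext i; fin_cases i <;> simp at hsum ⊢; linarith⟩

/-- Membership in a homothet of `K1` bounds the `ℓ¹`-distance to its centre. -/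
theorem abs_sub_add_le_of_mem_vadd_smul_K1 {r : ℝ} (hr : 0 ≤ r) {u x : Fin 3 → ℝ}
    (hx : x ∈ u +ᵥ r • K1) : |x 0 - u 0| + |x 1 - u 1| + |x 2 - u 2| ≤ r := by
  obtain ⟨_, ⟨k, hk, rfl⟩, rfl⟩ := hx
  have hk : |k 0| + |k 1| + |k 2| ≤ 1 := hk
  simp only [vadd_eq_add, Pi.add_apply, Pi.smul_apply, smul_eq_mul, add_sub_cancel_left,
    abs_mul, abs_of_nonneg hr]
  nlinarith

/-- If `λ • K1 + u` (with `0 < λ ≤ 1`) contains a vertex `v` of `K1`, then for every facet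
`F` of `K1` containing `v`, the intersection `F ∩ (λ • K1 + u)` is contained in a homothetic
copy of `F` with centre `v` and ratio `μ ≤ λ`. -/
theorem facet_intersection_in_homothet (lam : ℝ) (hlam₀ : 0 < lam) (hlam₁ : lam ≤ 1)
    (u : Fin 3 → ℝ) (v : Fin 3 → ℝ) (hv : v ∈ K1Vertices) (hvmem : v ∈ u +ᵥ lam • K1)
    (e : Fin 3 → ℝ) (he : ∀ i, e i = 1 ∨ e i = -1) (hvF : v ∈ K1Facet e) :
    ∃ μ : ℝ, 0 ≤ μ ∧ μ ≤ lam ∧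
      K1Facet e ∩ (u +ᵥ lam • K1) ⊆ (fun y => v + μ • (y - v)) '' K1Facet e := by
  refine ⟨lam, hlam₀.le, le_rfl, ?_⟩
  rintro x ⟨hxF, hxmem⟩
  obtain ⟨hx, hxs⟩ := (mem_K1Facet_iff he).1 hxF
  have hvs := ((mem_K1Facet_iff he).1 hvF).2
  have hxu := abs_sub_add_le_of_mem_vadd_smul_K1 hlam₀.le hxmem
  have hvu := abs_sub_add_le_of_mem_vadd_smul_K1 hlam₀.le hvmem
  obtain ⟨j, rfl⟩ := exists_eq_single_of_mem_K1Vertices_of_mem_K1Facet he hv hvF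
  have hsq : ∀ i, e i * e i = 1 := fun i => by rcases he i with h | h <;> simp [h]
  have habs : ∀ i, ∀ t : ℝ, e i * t ≤ |t| ∧ -(e i * t) ≤ |t| := fun i t => by
    rcases he i with h | h <;> simp [h, le_abs_self, neg_le_abs]
  have hj : 1 - e j * x j ≤ lam := by
    have hxa := fun i => habs i (x i - u i)
    have hva := fun i => habs i ((Pi.single j (e j) : Fin 3 → ℝ) i - u i)
    simp only [mul_sub] at hxa hva
    have hx0 := hxa 0
    have hx1 := hxa 1
    have hx2 := hxa 2
    have hv0 := hva 0
    have hv1 := hva 1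
    have hv2 := hva 2
    fin_cases j <;> simp [hsq] at * <;> linarith
  refine ⟨Pi.single j (e j) + lam⁻¹ • (x - Pi.single j (e j)), (mem_K1Facet_iff he).2 ⟨?_, ?_⟩, ?_⟩
  · intro i
    simp only [Pi.add_apply, Pi.smul_apply, Pi.sub_apply, smul_eq_mul]
    by_cases hij : i = j
    · subst hij
      have h : lam⁻¹ * (1 - e i * x i) ≤ 1 := by
        rw [inv_mul_le_iff₀ hlam₀]
        linarith
      simp only [Pi.single_eq_same]
      linear_combination h + (lam⁻¹ - 1) * hsq i
    · have h := mul_nonneg (inv_nonneg.2 hlam₀.le) (hx i)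
      simp only [Pi.single_eq_of_ne hij]
      linarith
  · simp only [Pi.add_apply, Pi.smul_apply, Pi.sub_apply, smul_eq_mul]
    linear_combination (1 - lam⁻¹) * hvs + lam⁻¹ * hxs
  · simp [smul_smul, hlam₀.ne']
end

section
/- If T is an equilateral triangle in the two-dimensional plane, then γ₃(T) = 2/3, i.e., the smallest λ > 0 such that T can be covered by three translates of λT equals 2/3. -/
open Pointwise

theorem mem_convexHull_triple_iff {E : Type*} [AddCommGroup E] [Module ℝ E] {a b c x : E} :
    x ∈ convexHull ℝ {a, b, c} ↔ ∃ r s t : ℝ, 0 ≤ r ∧ 0 ≤ s ∧ 0 ≤ t ∧ r + s + t = 1 ∧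
      r • a + s • b + t • c = x := by
  constructor
  · rw [convexHull_insert (Set.insert_nonempty _ _), convexHull_pair, mem_convexJoin]
    rintro ⟨_, rfl, y, ⟨p, q, hp, hq, hpq, rfl⟩, ⟨r, s, hr, hs, hrs, rfl⟩⟩
    refine ⟨r, s * p, s * q, hr, by positivity, by positivity, ?_, by module⟩
    rw [add_assoc, ← mul_add, hpq, mul_one, hrs]
  · rintro ⟨r, s, t, hr, hs, ht, h, rfl⟩
    have hsub := subset_convexHull ℝ ({a, b, c} : Set E)
    have hsum := (convex_convexHull ℝ ({a, b, c} : Set E)).sum_mem (t := Finset.univ)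
      (w := ![r, s, t]) (z := ![a, b, c])
      (by intro i _; fin_cases i <;> simpa) (by simpa [Fin.sum_univ_three] using h)
      (by intro i _; fin_cases i <;> exact hsub (by simp))
    simpa [Fin.sum_univ_three] using hsum

/-- If a linear functional varies by at most `w` on `K`, it varies by at most `r * w` on any
translate of `r • K`. -/
theorem map_sub_map_le_of_mem_vadd_smul {E : Type*} [AddCommGroup E] [Module ℝ E]
    (f : E →ₗ[ℝ] ℝ) {K : Set E} {w r : ℝ} (hK : ∀ x ∈ K, ∀ y ∈ K, f x - f y ≤ w) (hr : 0 ≤ r)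
    {u p q : E} (hp : p ∈ u +ᵥ r • K) (hq : q ∈ u +ᵥ r • K) : f p - f q ≤ r * w := by
  obtain ⟨_, ⟨x, hx, rfl⟩, rfl⟩ := hp
  obtain ⟨_, ⟨y, hy, rfl⟩, rfl⟩ := hq
  have h := mul_le_mul_of_nonneg_left (hK x hx y hy) hr
  simp only [vadd_eq_add, map_add, map_smul, smul_eq_mul]
  linarith

section Equilateral

variable {E : Type*} [NormedAddCommGroup E] [InnerProductSpace ℝ E] {a b c : E}

/-- In an equilateral triangle `a b c`, the functional `⟪(a - b) + (a - c), ·⟫` is constant on the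
side `b c` and exceeds that constant at `a` by `3 / 2` of the squared side length. -/
theorem inner_altitude_of_equilateral (hab : dist a b = dist b c) (hbc : dist b c = dist c a) :
    inner ℝ ((a - b) + (a - c)) b = inner ℝ ((a - b) + (a - c)) c ∧
      inner ℝ ((a - b) + (a - c)) a =
        inner ℝ ((a - b) + (a - c)) b + 3 / 2 * dist a b ^ 2 := by
  have h₁ : dist a b ^ 2 = dist b c ^ 2 := by rw [hab]
  have h₂ : dist b c ^ 2 = dist c a ^ 2 := by rw [hbc]
  simp only [dist_eq_norm, ← real_inner_self_eq_norm_sq, inner_sub_left, inner_sub_right,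
    inner_add_left, real_inner_comm a b, real_inner_comm a c, real_inner_comm b c] at *
  constructor <;> linarith

/-- A homothetic copy of an equilateral triangle containing the vertex `a` and a point at least as
far from `a` in the direction of the altitude as the centroid has ratio at least `2 / 3`. -/
theorem two_thirds_le_of_mem_of_mem (hab : dist a b = dist b c) (hbc : dist b c = dist c a)
    (hpos : 0 < dist a b) {r s t lam : ℝ} (hsum : r + s + t = 1) (hr : r ≤ 1 / 3)
    (hlam : 0 ≤ lam) {u : E} (ha : a ∈ u +ᵥ lam • convexHull ℝ {a, b, c})
    (hq : r • a + s • b + t • c ∈ u +ᵥ lam • convexHull ℝ {a, b, c}) : 2 / 3 ≤ lam := by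
  obtain ⟨hside, hapex⟩ := inner_altitude_of_equilateral hab hbc
  set n := (a - b) + (a - c)
  have hcomb : ∀ r s t : ℝ, r + s + t = 1 →
      inner ℝ n (r • a + s • b + t • c) = inner ℝ n b + r * (3 / 2 * dist a b ^ 2) := by
    intro r s t h
    simp only [inner_add_right, inner_smul_right, ← hside, hapex]
    linear_combination inner ℝ n b * h
  have hd : 0 < dist a b ^ 2 := by positivity
  have hwidth := map_sub_map_le_of_mem_vadd_smul (innerₛₗ ℝ n) (w := 3 / 2 * dist a b ^ 2)
    (by
      intro x hx y hy
      obtain ⟨r, s, t, hr, hs, ht, h, rfl⟩ := mem_convexHull_triple_iff.1 hx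
      obtain ⟨r', s', t', hr', hs', ht', h', rfl⟩ := mem_convexHull_triple_iff.1 hy
      simp only [innerₛₗ_apply_apply, hcomb _ _ _ h, hcomb _ _ _ h']
      nlinarith) hlam ha hq
  simp only [innerₛₗ_apply_apply, hcomb _ _ _ hsum, hapex] at hwidth
  by_contra! hlt
  nlinarith

end Equilateral

theorem convexHull_triple_subset_iUnion {E : Type*} [AddCommGroup E] [Module ℝ E] (a b c : E) :
    convexHull ℝ {a, b, c} ⊆
      ⋃ i, ((1 / 3 : ℝ) • ![a, b, c] i +ᵥ (2 / 3 : ℝ) • convexHull ℝ {a, b, c}) := by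
  intro x hx
  obtain ⟨r, s, t, hr, hs, ht, h, rfl⟩ := mem_convexHull_triple_iff.1 hx
  have key : ∀ (i : Fin 3) (r' s' t' : ℝ), 0 ≤ r' → 0 ≤ s' → 0 ≤ t' → r' + s' + t' = 1 →
      (1 / 3 : ℝ) • ![a, b, c] i + (2 / 3 : ℝ) • (r' • a + s' • b + t' • c) =
        r • a + s • b + t • c →
      r • a + s • b + t • c ∈
        ⋃ i, ((1 / 3 : ℝ) • ![a, b, c] i +ᵥ (2 / 3 : ℝ) • convexHull ℝ {a, b, c}) := by
    intro i r' s' t' hr' hs' ht' h' heq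
    rw [← heq]
    exact Set.mem_iUnion.2 ⟨i, Set.vadd_mem_vadd_set (Set.smul_mem_smul_set
      (mem_convexHull_triple_iff.2 ⟨r', s', t', hr', hs', ht', h', rfl⟩))⟩
  have hcases : 1 / 3 ≤ r ∨ 1 / 3 ≤ s ∨ 1 / 3 ≤ t := by
    by_contra! hlt
    linarith [hlt.1, hlt.2.1, hlt.2.2]
  rcases hcases with h₀ | h₁ | h₂
  · refine key 0 (3 / 2 * r - 1 / 2) (3 / 2 * s) (3 / 2 * t) ?_ ?_ ?_ ?_ ?_
    on_goal 5 => simp only [Matrix.cons_val]; module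
    all_goals linarith
  · refine key 1 (3 / 2 * r) (3 / 2 * s - 1 / 2) (3 / 2 * t) ?_ ?_ ?_ ?_ ?_
    on_goal 5 => simp only [Matrix.cons_val]; module
    all_goals linarith
  · refine key 2 (3 / 2 * r) (3 / 2 * s) (3 / 2 * t - 1 / 2) ?_ ?_ ?_ ?_ ?_
    on_goal 5 => simp only [Matrix.cons_val]; module
    all_goals linarith

/-- γ₃(T) = 2/3 for every equilateral triangle `T` in the plane. -/
theorem gamma_three_equilateral_triangle (v₁ v₂ v₃ : EuclideanSpace ℝ (Fin 2))
    (h₁₂ : dist v₁ v₂ = dist v₂ v₃) (h₂₃ : dist v₂ v₃ = dist v₃ v₁)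
    (hpos : 0 < dist v₁ v₂) :
    IsLeast {lam : ℝ | 0 < lam ∧ ∃ u : Fin 3 → EuclideanSpace ℝ (Fin 2),
      convexHull ℝ {v₁, v₂, v₃} ⊆ ⋃ i, (u i +ᵥ lam • convexHull ℝ {v₁, v₂, v₃})}
      (2 / 3) := by
  refine ⟨⟨by norm_num, _, convexHull_triple_subset_iUnion v₁ v₂ v₃⟩, ?_⟩
  rintro lam ⟨hlam, u, hu⟩
  -- Among the three vertices and the centroid, two lie in the same translate.
  have hmem : ∀ r s t : ℝ, 0 ≤ r → 0 ≤ s → 0 ≤ t → r + s + t = 1 →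
      ∃ i, r • v₁ + s • v₂ + t • v₃ ∈ u i +ᵥ lam • convexHull ℝ {v₁, v₂, v₃} :=
    fun r s t hr hs ht h ↦ Set.mem_iUnion.1
      (hu (mem_convexHull_triple_iff.2 ⟨r, s, t, hr, hs, ht, h, rfl⟩))
  have hrot₁ : ({v₁, v₂, v₃} : Set (EuclideanSpace ℝ (Fin 2))) = {v₂, v₃, v₁} := by
    ext; simp only [Set.mem_insert_iff, Set.mem_singleton_iff]; tauto
  have hrot₂ : ({v₁, v₂, v₃} : Set (EuclideanSpace ℝ (Fin 2))) = {v₃, v₁, v₂} := by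
    ext; simp only [Set.mem_insert_iff, Set.mem_singleton_iff]; tauto
  have sep₁ : ∀ (i : Fin 3) (r s t : ℝ), r + s + t = 1 → r ≤ 1 / 3 →
      v₁ ∈ u i +ᵥ lam • convexHull ℝ {v₁, v₂, v₃} →
      r • v₁ + s • v₂ + t • v₃ ∈ u i +ᵥ lam • convexHull ℝ {v₁, v₂, v₃} → 2 / 3 ≤ lam :=
    fun i r s t h hr ↦ two_thirds_le_of_mem_of_mem h₁₂ h₂₃ hpos h hr hlam.le
  have sep₂ : ∀ (i : Fin 3) (r s t : ℝ), r + s + t = 1 → s ≤ 1 / 3 →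
      v₂ ∈ u i +ᵥ lam • convexHull ℝ {v₁, v₂, v₃} →
      r • v₁ + s • v₂ + t • v₃ ∈ u i +ᵥ lam • convexHull ℝ {v₁, v₂, v₃} → 2 / 3 ≤ lam := by
    intro i r s t h hs
    rw [hrot₁, show r • v₁ + s • v₂ + t • v₃ = s • v₂ + t • v₃ + r • v₁ by abel]
    exact two_thirds_le_of_mem_of_mem h₂₃ (h₂₃.symm.trans h₁₂.symm) (h₁₂ ▸ hpos)
      (by linarith) hs hlam.le
  have sep₃ : ∀ (i : Fin 3) (r s t : ℝ), r + s + t = 1 → t ≤ 1 / 3 →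
      v₃ ∈ u i +ᵥ lam • convexHull ℝ {v₁, v₂, v₃} →
      r • v₁ + s • v₂ + t • v₃ ∈ u i +ᵥ lam • convexHull ℝ {v₁, v₂, v₃} → 2 / 3 ≤ lam := by
    intro i r s t h ht
    rw [hrot₂, show r • v₁ + s • v₂ + t • v₃ = t • v₃ + r • v₁ + s • v₂ by abel]
    exact two_thirds_le_of_mem_of_mem (h₂₃.symm.trans h₁₂.symm) h₁₂ (h₂₃ ▸ h₁₂ ▸ hpos)
      (by linarith) ht hlam.le
  obtain ⟨i₁, m₁⟩ := hmem 1 0 0 (by norm_num) le_rfl le_rfl (by norm_num)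
  obtain ⟨i₂, m₂⟩ := hmem 0 1 0 le_rfl (by norm_num) le_rfl (by norm_num)
  obtain ⟨i₃, m₃⟩ := hmem 0 0 1 le_rfl le_rfl (by norm_num) (by norm_num)
  obtain ⟨j, m⟩ := hmem (1 / 3) (1 / 3) (1 / 3) (by norm_num) (by norm_num) (by norm_num)
    (by norm_num)
  have n₁ : v₁ ∈ u i₁ +ᵥ lam • convexHull ℝ {v₁, v₂, v₃} := by simpa using m₁
  have n₂ : v₂ ∈ u i₂ +ᵥ lam • convexHull ℝ {v₁, v₂, v₃} := by simpa using m₂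
  have n₃ : v₃ ∈ u i₃ +ᵥ lam • convexHull ℝ {v₁, v₂, v₃} := by simpa using m₃
  have hpigeon : i₁ = i₂ ∨ i₁ = i₃ ∨ i₂ = i₃ ∨ i₁ = j ∨ i₂ = j ∨ i₃ = j := by omega
  rcases hpigeon with rfl | rfl | rfl | rfl | rfl | rfl
  · exact sep₁ _ _ _ _ (by norm_num) (by norm_num) n₁ m₂
  · exact sep₁ _ _ _ _ (by norm_num) (by norm_num) n₁ m₃
  · exact sep₂ _ _ _ _ (by norm_num) (by norm_num) n₂ m₃
  · exact sep₁ _ _ _ _ (by norm_num) le_rfl n₁ m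
  · exact sep₂ _ _ _ _ (by norm_num) le_rfl n₂ m
  · exact sep₃ _ _ _ _ (by norm_num) le_rfl n₃ m
end

section
/- The optimal 3-covering configuration of an equilateral triangle is unique: if T = conv{v₁, v₂, v₃} is an equilateral triangle in the plane and t₁, t₂, t₃ ∈ ℝ² satisfy T ⊆ ∪_{i=1}^3 ((2/3)T + tᵢ), then {t₁, t₂, t₃} = {(1/3)v₁, (1/3)v₂, (1/3)v₃}; equivalently, the three covering triangles are exactly the three corner homothets vᵢ + (2/3)(T − vᵢ), i = 1, 2, 3. -/
open Pointwise

theorem affineIndependent_of_dist_eq {V : Type*} [NormedAddCommGroup V] [NormedSpace ℝ V]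
    {v₁ v₂ v₃ : V} (h₁₂ : dist v₁ v₂ = dist v₂ v₃) (h₂₃ : dist v₂ v₃ = dist v₃ v₁)
    (hpos : 0 < dist v₁ v₂) : AffineIndependent ℝ ![v₁, v₂, v₃] := by
  rw [affineIndependent_iff_not_collinear_set]
  intro hcol
  rcases hcol.wbtw_or_wbtw_or_wbtw with h | h | h <;>
  · have := h.dist_add_dist
    simp only [dist_comm v₂ v₁, dist_comm v₃ v₂, dist_comm v₁ v₃] at *
    linarith

namespace AffineBasis

variable {ι V : Type*} [AddCommGroup V] [Module ℝ V]

theorem coord_add_smul (b : AffineBasis ι ℝ V) (j : ι) (r : ℝ) (t y : V) :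
    b.coord j (t + r • y) = b.coord j t + r * b.coord j y - r * b.coord j 0 := by
  have h (x : V) : b.coord j x = (b.coord j).linear x + b.coord j 0 :=
    congrFun (b.coord j).decomp x
  rw [h (t + r • y), h t, h y, map_add, map_smul, smul_eq_mul]
  ring

/-- A simplex with vertices `b i` is covered by as many translates of its homothet of ratio
`r = 1 - 1 / card ι` as it has vertices only by the corner homothets. -/
theorem range_eq_of_convexHull_subset_iUnion [Fintype ι] (b : AffineBasis ι ℝ V) {r : ℝ}
    (hr : 0 ≤ r) (hcard : (1 - r) * Fintype.card ι = 1) (t : ι → V)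
    (hcover : convexHull ℝ (Set.range b) ⊆ ⋃ i, (t i +ᵥ r • convexHull ℝ (Set.range b))) :
    Set.range t = Set.range fun i => (1 - r) • b i := by
  classical
  have hr1 : 0 < 1 - r := by
    by_contra! h
    nlinarith [Nat.cast_nonneg (α := ℝ) (Fintype.card ι)]
  -- Each translate is cut out by the lower bounds `p i j` on the barycentric coordinates.
  set p : ι → ι → ℝ := fun i j => b.coord j (t i) - r * b.coord j 0 with hp
  have hsum (i : ι) : ∑ j, p i j = 1 - r := by
    simp [hp, Finset.sum_sub_distrib, ← Finset.mul_sum]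
  have hcov (x : V) (hx : ∀ j, 0 ≤ b.coord j x) : ∃ i, ∀ j, p i j ≤ b.coord j x := by
    have hxT : x ∈ convexHull ℝ (Set.range b) := by
      rwa [b.convexHull_eq_nonneg_coord]
    obtain ⟨i, hi⟩ := Set.mem_iUnion.1 (hcover hxT)
    obtain ⟨_, ⟨y, hy, rfl⟩, rfl⟩ := hi
    rw [b.convexHull_eq_nonneg_coord] at hy
    refine ⟨i, fun j => ?_⟩
    simp only [vadd_eq_add, coord_add_smul, hp]
    nlinarith [mul_nonneg hr (hy j)]
  have hvert (k : ι) : ∃ i, ∀ j, p i j ≤ b.coord j (b k) := hcov _ fun j => by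
    rw [b.coord_apply]; split_ifs <;> norm_num
  choose f hf using hvert
  have hoff {k j : ι} (h : j ≠ k) : p (f k) j ≤ 0 := by
    simpa [b.coord_apply, h] using hf k j
  have hdiag (k : ι) : 1 - r ≤ p (f k) k := by
    rw [← hsum (f k), ← Finset.add_sum_erase _ _ (Finset.mem_univ k)]
    have := Finset.sum_nonpos fun j (hj : j ∈ Finset.univ.erase k) =>
      hoff (Finset.ne_of_mem_erase hj)
    linarith
  have hinj : Function.Injective f := by
    intro k l hkl
    by_contra hne
    have h₁ := hdiag k
    rw [hkl] at h₁
    linarith [hoff (k := l) hne]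
  have hsurj : Function.Surjective f := Finite.injective_iff_surjective.1 hinj
  have hconst : ∑ _k : ι, (1 - r) = 1 := by
    rw [Finset.sum_const, Finset.card_univ, nsmul_eq_mul, mul_comm, hcard]
  -- Otherwise the point with coordinates proportional to `p (f k) k` would be uncovered.
  have hdsum : ∑ k, p (f k) k ≤ 1 := by
    by_contra! hS
    set S := ∑ k, p (f k) k
    have hw : ∑ k, p (f k) k / S = 1 := by
      rw [← Finset.sum_div, div_self (by positivity)]
    have hc (j : ι) : b.coord j (Finset.univ.affineCombination ℝ b fun k => p (f k) k / S)
        = p (f j) j / S := b.coord_apply_combination_of_mem (Finset.mem_univ j) hw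
    obtain ⟨i, hi⟩ := hcov (Finset.univ.affineCombination ℝ b fun k => p (f k) k / S)
      fun j => by rw [hc]; exact div_nonneg (hr1.le.trans (hdiag j)) (by positivity)
    obtain ⟨k, rfl⟩ := hsurj i
    have := hi k
    rw [hc] at this
    exact this.not_gt (div_lt_self (hr1.trans_le (hdiag k)) hS)
  have hdiag_eq (k : ι) : p (f k) k = 1 - r := by
    have h := (Finset.sum_eq_sum_iff_of_le fun k _ => hdiag k).1
      (le_antisymm (Finset.sum_le_sum fun k _ => hdiag k) (hdsum.trans hconst.ge))
    exact (h k (Finset.mem_univ k)).symm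
  have hoff_eq {k j : ι} (h : j ≠ k) : p (f k) j = 0 := by
    have hs := hsum (f k)
    rw [← Finset.add_sum_erase _ _ (Finset.mem_univ k), hdiag_eq, add_eq_left] at hs
    exact (Finset.sum_eq_zero_iff_of_nonpos fun j hj => hoff (Finset.ne_of_mem_erase hj)).1 hs j
      (Finset.mem_erase.2 ⟨h, Finset.mem_univ j⟩)
  have ht : t ∘ f = fun k => (1 - r) • b k := by
    funext k
    refine b.ext_elem fun j => ?_
    have h := b.coord_add_smul j (1 - r) 0 (b k)
    rw [zero_add, b.coord_apply] at h
    rw [Function.comp_apply, h]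
    split_ifs with hjk
    · subst hjk
      have := hdiag_eq j
      simp only [hp] at this
      linarith
    · have := hoff_eq hjk
      simp only [hp] at this
      linarith
  rw [← ht, hsurj.range_comp]

end AffineBasis

/-- The optimal 3-covering configuration of an equilateral triangle is unique: the three
translation vectors must be `(1/3)v₁, (1/3)v₂, (1/3)v₃`, i.e. the covering triangles are
the three corner homothets with ratio 2/3. -/
theorem unique_optimal_three_covering (v₁ v₂ v₃ : EuclideanSpace ℝ (Fin 2))
    (h₁₂ : dist v₁ v₂ = dist v₂ v₃) (h₂₃ : dist v₂ v₃ = dist v₃ v₁)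
    (hpos : 0 < dist v₁ v₂) (t : Fin 3 → EuclideanSpace ℝ (Fin 2))
    (hcover : convexHull ℝ {v₁, v₂, v₃} ⊆
      ⋃ i, (t i +ᵥ (2 / 3 : ℝ) • convexHull ℝ {v₁, v₂, v₃})) :
    ({t 0, t 1, t 2} : Set (EuclideanSpace ℝ (Fin 2))) =
      {(1 / 3 : ℝ) • v₁, (1 / 3 : ℝ) • v₂, (1 / 3 : ℝ) • v₃} := by
  have hind := affineIndependent_of_dist_eq h₁₂ h₂₃ hpos
  let b : AffineBasis (Fin 3) ℝ (EuclideanSpace ℝ (Fin 2)) :=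
    ⟨![v₁, v₂, v₃], hind, hind.affineSpan_eq_top_iff_card_eq_finrank_add_one.2 (by simp)⟩
  have hrange {X : Type} (g : Fin 3 → X) : Set.range g = {g 0, g 1, g 2} := by
    ext x
    simp [Fin.exists_fin_succ, eq_comm]
  have hb : Set.range b = {v₁, v₂, v₃} := hrange b
  have h := b.range_eq_of_convexHull_subset_iUnion (r := 2 / 3) (by norm_num) (by norm_num) t
    (by rwa [hb])
  rw [hrange t, hrange, show (1 - 2 / 3 : ℝ) = 1 / 3 by norm_num] at h
  exact h
end

section
/- The unit cross-polytope K₁ is covered by the six translates of (2/3)K₁ by the vectors ±(1/3, 0, 0), ±(0, 1/3, 0), ±(0, 0, 1/3); that is, K₁ ⊆ ((2/3)K₁ + (1/3,0,0)) ∪ ((2/3)K₁ − (1/3,0,0)) ∪ ((2/3)K₁ + (0,1/3,0)) ∪ ((2/3)K₁ − (0,1/3,0)) ∪ ((2/3)K₁ + (0,0,1/3)) ∪ ((2/3)K₁ − (0,0,1/3)). -/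
open Pointwise

theorem mem_vadd_smul_K1_iff {r : ℝ} (hr : 0 < r) (v x : Fin 3 → ℝ) :
    x ∈ v +ᵥ r • K1 ↔ |x 0 - v 0| + |x 1 - v 1| + |x 2 - v 2| ≤ r := by
  rw [Set.mem_vadd_set_iff_neg_vadd_mem, Set.mem_smul_set_iff_inv_smul_mem₀ hr.ne']
  simp only [K1, Set.mem_ofPred_eq, Pi.smul_apply, vadd_eq_add, Pi.sub_apply,
    smul_eq_mul, abs_mul, abs_of_pos (inv_pos.2 hr), ← mul_add, neg_add_eq_sub]
  rw [inv_mul_le_iff₀ hr, mul_one]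

/-- Shifting a coordinate of largest absolute value by `1/3` towards `0` brings a point of the unit
cross-polytope into the cross-polytope of radius `2/3`. -/
theorem abs_shift_add_le_two_thirds {a b c : ℝ} (h : |a| + |b| + |c| ≤ 1)
    (hb : |b| ≤ |a|) (hc : |c| ≤ |a|) :
    |a - 1 / 3| + |b| + |c| ≤ 2 / 3 ∨ |a - -1 / 3| + |b| + |c| ≤ 2 / 3 := by
  rcases le_total 0 a with ha | ha
  · left
    rw [abs_of_nonneg ha] at h hb hc
    rcases abs_cases (a - 1 / 3) with ⟨h1, h2⟩ | ⟨h1, h2⟩ <;> linarith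
  · right
    rw [abs_of_nonpos ha] at h hb hc
    rcases abs_cases (a - -1 / 3) with ⟨h1, h2⟩ | ⟨h1, h2⟩ <;> linarith

/-- `K1` is covered by the six translates of `(2/3) • K1` by the vectors
`±(1/3,0,0), ±(0,1/3,0), ±(0,0,1/3)`. -/
theorem K1_covered_by_six_translates :
    K1 ⊆ (![(1 : ℝ)/3, 0, 0] +ᵥ (2 / 3 : ℝ) • K1) ∪
        (![-(1 : ℝ)/3, 0, 0] +ᵥ (2 / 3 : ℝ) • K1) ∪
        (![0, (1 : ℝ)/3, 0] +ᵥ (2 / 3 : ℝ) • K1) ∪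
        (![0, -(1 : ℝ)/3, 0] +ᵥ (2 / 3 : ℝ) • K1) ∪
        (![0, 0, (1 : ℝ)/3] +ᵥ (2 / 3 : ℝ) • K1) ∪
        (![0, 0, -(1 : ℝ)/3] +ᵥ (2 / 3 : ℝ) • K1) := by
  intro x hx
  have h : |x 0| + |x 1| + |x 2| ≤ 1 := hx
  have two_thirds_pos : (0 : ℝ) < 2 / 3 := by norm_num
  simp only [Set.mem_union, mem_vadd_smul_K1_iff two_thirds_pos, Matrix.cons_val, sub_zero]
  by_cases h0 : |x 1| ≤ |x 0| ∧ |x 2| ≤ |x 0|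
  · have := abs_shift_add_le_two_thirds h h0.1 h0.2
    tauto
  by_cases h1 : |x 0| ≤ |x 1| ∧ |x 2| ≤ |x 1|
  · have := abs_shift_add_le_two_thirds (a := x 1) (b := x 0) (c := x 2) (by linarith) h1.1 h1.2
    rw [add_comm _ |x 0|, add_comm _ |x 0|] at this
    tauto
  · have h2 : |x 0| ≤ |x 2| ∧ |x 1| ≤ |x 2| := by grind
    have := abs_shift_add_le_two_thirds (a := x 2) (b := x 0) (c := x 1) (by linarith) h2.1 h2.2
    rw [add_assoc, add_comm, add_assoc _ |x 0|, add_comm _ (|x 0| + |x 1|)] at this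
    tauto
end
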